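/- Let (X,d) be a Polish space and f a continuous semi-flow on X. If there exists at least one nonempty closed f-invariant subset Λ₀ of X such that the restricted system (Λ₀, f) is chaotic, then there exists a maximal chaotic subsystem: a nonempty closed f-invariant subset Λ such that (Λ, f) is chaotic and there is no closed f-invariant subset Λ' with Λ ⊊ Λ' for which (Λ', f) is chaotic. -/

import Mathlib

open Filter Topology Metric Set TopologicalSpace

/-- `f` is a continuous semi-flow on `X`: jointly continuous on `[0,∞) × X`,
`f 0 x = x`, and `f s (f t x) = f (s+t) x` for `s, t ≥ 0`. -/
def IsSemiflow {X : Type*} [MetricSpace X] (f : ℝ → X → X) : Prop :=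
  ContinuousOn (fun p : ℝ × X => f p.1 p.2) (Set.Ici 0 ×ˢ Set.univ) ∧
  (∀ x, f 0 x = x) ∧
  (∀ s t : ℝ, 0 ≤ s → 0 ≤ t → ∀ x, f s (f t x) = f (s + t) x)

/-- the forward orbit `O₊(f,x) = {f t x : t ≥ 0}`. -/
def posOrbit {X : Type*} [MetricSpace X] (f : ℝ → X → X) (x : X) : Set X :=
  (fun t => f t x) '' Set.Ici (0 : ℝ)

/-- `x` is Birkhoff recurrent for `f`. -/
def BirkhoffRecurrent {X : Type*} [MetricSpace X] (f : ℝ → X → X) (x : X) : Prop :=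
  ∀ ε > (0:ℝ), ∃ T > (0:ℝ), ∀ τ ≥ (0:ℝ), ∀ υ ≥ (0:ℝ),
    ∃ t : ℝ, τ < t ∧ t < τ + T ∧ dist (f υ x) (f t x) < ε

/-- `f` is topologically quasi-transitive: some forward orbit is dense. -/
def QuasiTransitive {X : Type*} [MetricSpace X] (f : ℝ → X → X) : Prop :=
  ∃ x : X, Dense (posOrbit f x)

/-- `(X,f)` is chaotic: quasi-transitive, Birkhoff recurrent points dense, and
two motions far away from each other. -/
def Chaotic {X : Type*} [MetricSpace X] (f : ℝ → X → X) : Prop :=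
  QuasiTransitive f ∧ Dense {x : X | BirkhoffRecurrent f x} ∧
  ∃ x y : X, closure (posOrbit f x) ∩ closure (posOrbit f y) = ∅

/-- `Λ` is invariant under the semi-flow `f`. -/
def InvariantSet {X : Type*} [MetricSpace X] (f : ℝ → X → X) (Λ : Set X) : Prop :=
  ∀ t ≥ (0:ℝ), ∀ x ∈ Λ, f t x ∈ Λ

/-- the restricted subsystem `(Λ, f)` is chaotic. -/
def ChaoticOn {X : Type*} [MetricSpace X] (f : ℝ → X → X) (Λ : Set X) : Prop :=
  (∃ x ∈ Λ, Λ ⊆ closure (posOrbit f x)) ∧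
  (Λ ⊆ closure ({x : X | BirkhoffRecurrent f x} ∩ Λ)) ∧
  ∃ x ∈ Λ, ∃ y ∈ Λ, closure (posOrbit f x) ∩ closure (posOrbit f y) = ∅

theorem semiflow_continuous {X : Type*} [MetricSpace X] {f : ℝ → X → X} (hf : IsSemiflow f)
    {t : ℝ} (ht : 0 ≤ t) : Continuous (f t) := by
  have h := hf.1.comp_continuous (f := fun x : X => (t, x)) (by fun_prop)
    (fun x => ⟨ht, trivial⟩)
  exact h

/-- In a chaotic subsystem, an open set meeting it is visited after an open set meeting it. -/
theorem chaoticOn_transitive {X : Type*} [MetricSpace X] {f : ℝ → X → X} (hf : IsSemiflow f)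
    {L : Set X} (hinv : InvariantSet f L) (hL : ChaoticOn f L) {U V : Set X} (hU : IsOpen U)
    (hV : IsOpen V) (hUL : (U ∩ L).Nonempty) (hVL : (V ∩ L).Nonempty) :
    ∃ p ∈ L, p ∈ U ∧ ∃ t : ℝ, 0 ≤ t ∧ f t p ∈ V := by
  obtain ⟨⟨x, hxL, hx⟩, hB, -⟩ := hL
  obtain ⟨u, huU, huL⟩ := hUL
  obtain ⟨v, hvV, hvL⟩ := hVL
  obtain ⟨_, hsU, s, hs, rfl⟩ := mem_closure_iff.1 (hx huL) U hU huU
  obtain ⟨z, hzV, hzB, hzL⟩ := mem_closure_iff.1 (hB hvL) V hV hvV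
  obtain ⟨ε, hε, hball⟩ := Metric.isOpen_iff.1 hV z hzV
  obtain ⟨T, -, hT⟩ := hzB ε hε
  have hs' : (0 : ℝ) ≤ s := hs
  obtain ⟨t, hst, -, hd⟩ := hT s hs' 0 le_rfl
  rw [hf.2.1] at hd
  have ht : 0 ≤ t := by linarith
  have hN : IsOpen (f t ⁻¹' V) := hV.preimage (semiflow_continuous hf ht)
  have hzN : z ∈ f t ⁻¹' V := hball (by rw [Metric.mem_ball, dist_comm]; exact hd)
  obtain ⟨_, hrN, r, hr, rfl⟩ := mem_closure_iff.1 (hx hzL) _ hN hzN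
  have hr' : (0 : ℝ) ≤ r := hr
  refine ⟨f s x, hinv s hs' x hxL, hsU, t + r - s, by linarith, ?_⟩
  rw [hf.2.2 _ _ (by linarith) hs', sub_add_cancel]
  have : f t (f r x) ∈ V := hrN
  rwa [hf.2.2 _ _ ht hr'] at this

/-- a not completely non-chaotic system has a maximal chaotic
subsystem. -/
theorem exists_maximal_chaotic_subsystem {X : Type*} [MetricSpace X] [CompleteSpace X]
    [SeparableSpace X] (f : ℝ → X → X) (hf : IsSemiflow f)
    (h : ∃ Λ₀ : Set X, Λ₀.Nonempty ∧ IsClosed Λ₀ ∧ InvariantSet f Λ₀ ∧ ChaoticOn f Λ₀) :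
    ∃ Λ : Set X, Λ.Nonempty ∧ IsClosed Λ ∧ InvariantSet f Λ ∧ ChaoticOn f Λ ∧
      ∀ Λ' : Set X, IsClosed Λ' → InvariantSet f Λ' → Λ ⊂ Λ' → ¬ ChaoticOn f Λ' := by
  obtain ⟨L0, hne0, hcl0, hinv0, hch0⟩ := h
  have hz : ∀ c ⊆ {L : Set X | IsClosed L ∧ InvariantSet f L ∧ ChaoticOn f L},
      IsChain (· ⊆ ·) c → c.Nonempty →
      ∃ ub ∈ {L : Set X | IsClosed L ∧ InvariantSet f L ∧ ChaoticOn f L}, ∀ s ∈ c, s ⊆ ub := by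
    intro c hcS hchain hcne
    have hsub : ∀ s ∈ c, s ⊆ closure (⋃₀ c) := fun s hs =>
      (subset_sUnion_of_mem hs).trans subset_closure
    have hinv : InvariantSet f (closure (⋃₀ c)) := by
      intro t ht x hx
      refine map_mem_closure (semiflow_continuous hf ht) hx ?_
      rintro y ⟨s, hs, hy⟩
      exact ⟨s, hs, (hcS hs).2.1 t ht y hy⟩
    refine ⟨closure (⋃₀ c), ⟨isClosed_closure, hinv, ?_, ?_, ?_⟩, hsub⟩
    · set K := closure (⋃₀ c) with hK
      have hKc : IsClosed K := isClosed_closure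
      have : CompleteSpace K := hKc.completeSpace_coe
      obtain ⟨s0, hs0⟩ := hcne
      obtain ⟨x0, hx0, -⟩ := (hcS hs0).2.2.1
      have : Nonempty K := ⟨⟨x0, hsub s0 hs0 hx0⟩⟩
      have : SecondCountableTopology X := UniformSpace.secondCountable_of_separable X
      let I : Set (Set X) := {V | V ∈ countableBasis X ∧ (V ∩ K).Nonempty}
      have hI : I.Countable := (countable_countableBasis X).mono fun V hV => hV.1
      let G : Set X → Set K := fun V => {p | ∃ t : ℝ, 0 ≤ t ∧ f t p ∈ V}
      have hGo : ∀ V ∈ I, IsOpen (G V) := by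
        intro V hV
        have : G V = ⋃ t : ℝ, ⋃ _ : 0 ≤ t, (fun p : K => f t p) ⁻¹' V := by
          ext p; simp [G]
        rw [this]
        exact isOpen_iUnion fun t => isOpen_iUnion fun ht =>
          (isOpen_of_mem_countableBasis hV.1).preimage
            ((semiflow_continuous hf ht).comp continuous_subtype_val)
      have hGd : ∀ V ∈ I, Dense (G V) := by
        intro V hV
        rw [dense_iff_inter_open]
        rintro U' hU' ⟨q, hq⟩
        obtain ⟨U, hU, rfl⟩ := isOpen_induced_iff.1 hU'
        have hVo := isOpen_of_mem_countableBasis hV.1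
        obtain ⟨a, haU, A, hA, haA⟩ := mem_closure_iff.1 q.2 U hU hq
        obtain ⟨w, hwV, hwK⟩ := hV.2
        obtain ⟨b, hbV, B, hB, hbB⟩ := mem_closure_iff.1 hwK V hVo hwV
        obtain ⟨C, hC, hAC, hBC⟩ := hchain.directedOn A hA B hB
        obtain ⟨p, hpC, hpU, t, ht, hpt⟩ := chaoticOn_transitive hf (hcS hC).2.1 (hcS hC).2.2
          hU hVo ⟨a, haU, hAC haA⟩ ⟨b, hbV, hBC hbB⟩
        exact ⟨⟨p, hsub C hC hpC⟩, hpU, t, ht, hpt⟩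
      obtain ⟨p, hp⟩ := (dense_biInter_of_isOpen hGo hI hGd).nonempty
      refine ⟨p, p.2, fun y hy => ?_⟩
      rw [(isBasis_countableBasis X).mem_closure_iff]
      intro V hV hyV
      obtain ⟨t, ht, hpt⟩ := mem_iInter₂.1 hp V ⟨hV, y, hyV, hy⟩
      exact ⟨f t p, hpt, t, ht, rfl⟩
    · refine closure_minimal ?_ isClosed_closure
      rintro y ⟨s, hs, hy⟩
      exact closure_mono (inter_subset_inter_right _ (hsub s hs)) ((hcS hs).2.2.2.1 hy)
    · obtain ⟨s, hs⟩ := hcne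
      obtain ⟨x, hx, y, hy, hxy⟩ := (hcS hs).2.2.2.2
      exact ⟨x, hsub s hs hx, y, hsub s hs hy, hxy⟩
  obtain ⟨M, hM0, hM⟩ := zorn_subset_nonempty
    {L : Set X | IsClosed L ∧ InvariantSet f L ∧ ChaoticOn f L} hz L0 ⟨hcl0, hinv0, hch0⟩
  refine ⟨M, hne0.mono hM0, hM.prop.1, hM.prop.2.1, hM.prop.2.2, ?_⟩
  intro L' hc hi hss hch
  exact hss.2 (hM.2 (y := L') ⟨hc, hi, hch⟩ hss.1)
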